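/- Let (U, A) be a 3-colored digraph where U is a connected unicyclic graph whose unique cycle has weight in {i, −i}. Then det A ∈ {1, −1} if and only if U has a unique perfect matching. -/

import Mathlib

/-!
In the Leibniz expansion of `det A`, a permutation `σ` contributes only if `σ x` is adjacent to `x`
for every `x`.  If `σ ∘ σ ≠ 1`, then `σ` has a cycle of length at least three; it traces a cycle
of the graph, of weight `±i`.  Reversing that cycle keeps the sign of `σ` and conjugates the weight,
which negates it, so such permutations cancel in pairs (`sum_nonInvolutive`).  To make the pairing an
involution, the reversed cycle is that of a point chosen from the set of `x` with `σ (σ x) ≠ x`,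
a set which the reversal preserves.

The remaining permutations are the involutions `σ` with `σ x` adjacent to `x` for all `x`
(`IsMatchPerm`).  These correspond bijectively to perfect matchings (`existsUnique_isPM_iff`), and
each contributes `(-1) ^ (n / 2)`: the entries multiply to `1` because
`A x y * A y x = |A x y| ^ 2 = 1` on edges.
Hence `det A = (-1) ^ (n / 2) * N`, where `N` is the number of perfect matchings
(`det_eq_card_matchPerm`).
-/

open SimpleGraph

/-- A perfect matching of a simple graph, given as a finite set of edges in which
every vertex lies in exactly one edge. -/
def IsPM {V : Type*} [DecidableEq V] (G : SimpleGraph V) (M : Finset (Sym2 V)) : Prop :=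
  (∀ e ∈ M, e ∈ G.edgeSet) ∧ ∀ v : V, (M.filter (fun e => v ∈ e)).card = 1

/-- `G` has a perfect matching. -/
def HasPM {V : Type*} [DecidableEq V] (G : SimpleGraph V) : Prop :=
  ∃ M, IsPM G M

/-- `(G, A)` is a 3-colored digraph: `A` is Hermitian with zero diagonal, entries in
`{1, -1, i, -i}` on edges of `G`, and `0` on non-edges. -/
def ThreeColored {V : Type*} (G : SimpleGraph V) (A : Matrix V V ℂ) : Prop :=
  A.IsHermitian ∧ (∀ v, A v v = 0) ∧
    (∀ u v, G.Adj u v → A u v ∈ ({1, -1, Complex.I, -Complex.I} : Set ℂ)) ∧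
    (∀ u v, u ≠ v → ¬ G.Adj u v → A u v = 0)

/-- The weight of a walk: the product of the entries of `A` along its darts. -/
def walkWeight {V : Type*} {G : SimpleGraph V} (A : Matrix V V ℂ) {u v : V}
    (p : G.Walk u v) : ℂ :=
  (p.darts.map (fun d => A d.toProd.1 d.toProd.2)).prod

/-- A closed walk (e.g. a cycle) `c` is independent in `G` if `G - V(c)` has a
perfect matching. -/
def IsIndep {V : Type*} [DecidableEq V] (G : SimpleGraph V) {u : V} (c : G.Walk u u) : Prop :=
  HasPM (G.induce {x : V | x ∉ c.support})

/-- The number of perfect matchings of `G`. -/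
noncomputable def numPM (V : Type*) [DecidableEq V] (G : SimpleGraph V) : ℕ :=
  {M : Finset (Sym2 V) | IsPM G M}.ncard

/-- A connected graph on `n` vertices is unicyclic if it has exactly `n` edges. -/
def Unicyclic (V : Type*) [Fintype V] (G : SimpleGraph V) : Prop :=
  G.Connected ∧ G.edgeSet.ncard = Fintype.card V

/-- A connected graph on `n` vertices is bicyclic if it has exactly `n + 1` edges. -/
def Bicyclic (V : Type*) [Fintype V] (G : SimpleGraph V) : Prop :=
  G.Connected ∧ G.edgeSet.ncard = Fintype.card V + 1

/-- Two cycles are regarded as the same cycle when they have the same edge set. -/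
def SameCycle {V : Type*} [DecidableEq V] {G : SimpleGraph V} {u v : V}
    (c : G.Walk u u) (d : G.Walk v v) : Prop :=
  c.edges.toFinset = d.edges.toFinset

/-- A bicyclic graph is of ∞-type if its cycles are pairwise edge-disjoint. -/
def InfinityType {V : Type*} [DecidableEq V] (G : SimpleGraph V) : Prop :=
  ∀ (u v : V) (c : G.Walk u u) (d : G.Walk v v), c.IsCycle → d.IsCycle →
    ¬ SameCycle c d → ∀ e ∈ c.edges, e ∉ d.edges

/-- A bicyclic graph is of θ-type if it is not of ∞-type. -/
def ThetaType {V : Type*} [DecidableEq V] (G : SimpleGraph V) : Prop :=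
  ¬ InfinityType G

/-- `e` is a peg on the cycle `c`: either a chord of `c`, or an edge joining a vertex
of `c` to a vertex outside `c`. -/
def IsPeg {V : Type*} {G : SimpleGraph V} {u : V} (c : G.Walk u u) (e : Sym2 V) : Prop :=
  ∃ x y, e = s(x, y) ∧
    ((x ∈ c.support ∧ y ∈ c.support ∧ e ∉ c.edges) ∨ (x ∈ c.support ∧ y ∉ c.support))

/-- The number of pegs on the cycle `c` relative to the perfect matching `M`. -/
noncomputable def pegCount {V : Type*} {G : SimpleGraph V} {u : V} (c : G.Walk u u)
    (M : Finset (Sym2 V)) : ℕ :=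
  {e : Sym2 V | e ∈ M ∧ IsPeg c e}.ncard

/-- A path is mm-alternating relative to `M` if its edges alternately belong to `M`,
beginning and ending with edges of `M`. -/
def MMAlt {V : Type*} {G : SimpleGraph V} (M : Finset (Sym2 V)) {a b : V}
    (p : G.Walk a b) : Prop :=
  p.IsPath ∧ Odd p.length ∧
    ∀ (k : ℕ) (h : k < p.edges.length), (p.edges.get ⟨k, h⟩ ∈ M ↔ Even k)

/-! ### Reversing one cycle of a permutation -/

/-- The permutation obtained from `σ` by reversing its cycle through `v`. -/
noncomputable def revCycle {V : Type*} [Fintype V] [DecidableEq V] (σ : Equiv.Perm V) (v : V) :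
    Equiv.Perm V :=
  (σ.cycleOf v)⁻¹ * (σ * (σ.cycleOf v)⁻¹)

section Reversal

variable {V : Type*} [Fintype V] [DecidableEq V] (σ : Equiv.Perm V) (v : V)

lemma cycleOf_inv_apply_ite (x : V) :
    (σ.cycleOf v)⁻¹ x = if σ.SameCycle v x then σ⁻¹ x else x := by
  rw [Equiv.Perm.cycleOf_inv, Equiv.Perm.cycleOf_apply]
  simp only [Equiv.Perm.sameCycle_inv]

lemma commute_cycleOf : Commute (σ.cycleOf v) σ := by
  ext x
  simp only [Equiv.Perm.mul_apply, Equiv.Perm.cycleOf_apply, Equiv.Perm.sameCycle_apply_right]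
  split_ifs <;> rfl

lemma revCycle_apply (x : V) :
    revCycle σ v x = if σ.SameCycle v x then σ⁻¹ x else σ x := by
  have h : σ.SameCycle v (σ⁻¹ x) ↔ σ.SameCycle v x := Equiv.Perm.sameCycle_symm_apply_right
  simp only [revCycle, Equiv.Perm.mul_apply, cycleOf_inv_apply_ite σ v x]
  split_ifs with hx
  · rw [show σ (σ⁻¹ x) = x from σ.apply_symm_apply x, cycleOf_inv_apply_ite, if_pos hx]
  · rw [cycleOf_inv_apply_ite, if_neg (by rwa [Equiv.Perm.sameCycle_apply_right])]

lemma cycleOf_revCycle : (revCycle σ v).cycleOf v = (σ.cycleOf v)⁻¹ := by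
  have hc : Commute (σ.cycleOf v)⁻¹ (σ * (σ.cycleOf v)⁻¹) :=
    ((commute_cycleOf σ v).inv_left).mul_right (Commute.refl _)
  -- `σ * c⁻¹` is `σ` with its cycle `c` through `v` removed, so it fixes `v`.
  have hv : (σ * (σ.cycleOf v)⁻¹) v = v := by
    rw [Equiv.Perm.mul_apply, cycleOf_inv_apply_ite, if_pos (Equiv.Perm.SameCycle.refl _ _)]
    exact σ.apply_symm_apply v
  rw [revCycle, Equiv.Perm.cycleOf_mul_of_apply_right_eq_self hc _ hv, ← Equiv.Perm.cycleOf_inv]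
  congr 1
  by_cases h : σ v = v
  · rw [(Equiv.Perm.cycleOf_eq_one_iff σ).2 h, Equiv.Perm.cycleOf_one]
  · exact (Equiv.Perm.isCycle_cycleOf σ h).cycleOf_eq (by simpa using h)

lemma revCycle_revCycle : revCycle (revCycle σ v) v = σ := by
  rw [revCycle, cycleOf_revCycle, revCycle, inv_inv]
  group

lemma sign_revCycle : (revCycle σ v).sign = σ.sign := by
  simp only [revCycle, map_mul, map_inv]
  rw [mul_comm, mul_assoc, ← mul_inv, Int.units_mul_self]
  simp

lemma revCycle_sq_ne_iff (x : V) :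
    revCycle σ v (revCycle σ v x) ≠ x ↔ σ (σ x) ≠ x := by
  have h : σ.SameCycle v (σ⁻¹ x) ↔ σ.SameCycle v x := Equiv.Perm.sameCycle_symm_apply_right
  by_cases hx : σ.SameCycle v x
  · rw [revCycle_apply σ v x, if_pos hx, revCycle_apply, if_pos (h.2 hx), not_iff_not,
      Equiv.Perm.inv_eq_iff_eq, Equiv.Perm.inv_eq_iff_eq]
    exact eq_comm
  · rw [revCycle_apply σ v x, if_neg hx, revCycle_apply,
      if_neg (by rwa [Equiv.Perm.sameCycle_apply_right])]

end Reversal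

/-! ### The graph cycle traced by an orbit -/

section CycleWalk

variable {V : Type*} {G : SimpleGraph V}

/-- The walk `v, σ v, …, σ^[k] v`. -/
def orbitWalk (σ : Equiv.Perm V) (v : V) (h : ∀ k : ℕ, G.Adj (σ^[k] v) (σ^[k + 1] v)) :
    ∀ k : ℕ, G.Walk v (σ^[k] v)
  | 0 => SimpleGraph.Walk.nil
  | k + 1 => (orbitWalk σ v h k).concat (h k)

variable (σ : Equiv.Perm V) (v : V)

lemma orbitWalk_support (h : ∀ k : ℕ, G.Adj (σ^[k] v) (σ^[k + 1] v)) (k : ℕ) :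
    (orbitWalk σ v h k).support = (List.range (k + 1)).map (fun j => σ^[j] v) := by
  induction k with
  | zero => simp [orbitWalk]
  | succ k ih =>
    rw [orbitWalk, SimpleGraph.Walk.support_concat, ih, List.range_succ (n := k + 1)]
    simp

lemma orbitWalk_edges (h : ∀ k : ℕ, G.Adj (σ^[k] v) (σ^[k + 1] v)) (k : ℕ) :
    (orbitWalk σ v h k).edges = (List.range k).map (fun j => s(σ^[j] v, σ^[j + 1] v)) := by
  induction k with
  | zero => simp [orbitWalk]
  | succ k ih =>
    rw [orbitWalk, SimpleGraph.Walk.edges_concat, ih, List.range_succ]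
    simp

lemma orbitWalk_weight (h : ∀ k : ℕ, G.Adj (σ^[k] v) (σ^[k + 1] v))
    (A : Matrix V V ℂ) (k : ℕ) :
    walkWeight A (orbitWalk σ v h k) = ∏ j ∈ Finset.range k, A (σ^[j] v) (σ^[j + 1] v) := by
  induction k with
  | zero => simp [orbitWalk, walkWeight]
  | succ k ih =>
    rw [Finset.prod_range_succ, ← ih, orbitWalk]
    rw [walkWeight, SimpleGraph.Walk.darts_concat]
    simp [walkWeight]

/-- An orbit of length at least three that moves along edges traces a graph cycle with the
expected weight. -/
lemma exists_cycle_of_orbit (h : ∀ k : ℕ, G.Adj (σ^[k] v) (σ^[k + 1] v))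
    (A : Matrix V V ℂ) (h3 : 3 ≤ Function.minimalPeriod σ v) :
    ∃ (u : V) (c : G.Walk u u), c.IsCycle ∧
      walkWeight A c =
        ∏ j ∈ Finset.range (Function.minimalPeriod σ v), A (σ^[j] v) (σ^[j + 1] v) := by
  obtain ⟨n, hn⟩ : ∃ n, Function.minimalPeriod σ v = n + 1 := ⟨_, (Nat.succ_pred (by omega)).symm⟩
  have hper : σ^[n + 1] v = v := by rw [← hn]; exact Function.iterate_minimalPeriod
  have hinj : ∀ i j, i ≤ n → j ≤ n → σ^[i] v = σ^[j] v → i = j := fun i j hi hj hij =>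
    Function.iterate_injOn_Iio_minimalPeriod (f := σ) (x := v)
      (by simp only [Set.mem_Iio]; omega) (by simp only [Set.mem_Iio]; omega) hij
  have hadj : G.Adj (σ^[n] v) v := by simpa only [hper] using h n
  refine ⟨_, SimpleGraph.Walk.cons hadj (orbitWalk σ v h n), ?_, ?_⟩
  · rw [SimpleGraph.Walk.cons_isCycle_iff, SimpleGraph.Walk.isPath_def, orbitWalk_support,
      orbitWalk_edges]
    constructor
    · refine List.Nodup.map_on ?_ List.nodup_range
      intro i hi j hj hij
      rw [List.mem_range] at hi hj
      exact hinj i j (by omega) (by omega) hij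
    · intro hmem
      obtain ⟨j, hj, he⟩ := List.mem_map.1 hmem
      rw [List.mem_range] at hj
      rcases Sym2.eq_iff.1 he with ⟨h1, -⟩ | ⟨h1, h2⟩
      · have := hinj j n (by omega) le_rfl h1
        omega
      · have h0 := hinj j 0 (by omega) (by omega) h1
        have h4 := hinj (j + 1) n (by omega) le_rfl h2
        omega
  · rw [hn, Finset.prod_range_succ, ← orbitWalk_weight σ v h, hper, mul_comm]
    simp [walkWeight]

end CycleWalk

/-! ### The determinant counts perfect matchings -/

section Determinant

variable {V : Type*} [Fintype V] [DecidableEq V] {G : SimpleGraph V} {A : Matrix V V ℂ}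

lemma prod_sameCycle_eq_prod_range (σ : Equiv.Perm V) (v : V) (f : V → ℂ) :
    ∏ x ∈ Finset.univ.filter (fun x => σ.SameCycle v x), f x =
      ∏ j ∈ Finset.range (Function.minimalPeriod σ v), f (σ^[j] v) := by
  symm
  refine Finset.prod_bij (fun j _ => σ^[j] v) ?_ ?_ ?_ ?_
  · intro j _
    simp only [Finset.mem_filter, Finset.mem_univ, true_and]
    exact ⟨j, by simp [Equiv.Perm.iterate_eq_pow]⟩
  · intro i hi j hj hij
    exact Function.iterate_injOn_Iio_minimalPeriod (f := σ) (x := v)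
      (by simpa using hi) (by simpa using hj) hij
  · intro x hx
    simp only [Finset.mem_filter, Finset.mem_univ, true_and] at hx
    obtain ⟨i, -, -, hi⟩ := Equiv.Perm.SameCycle.exists_pow_eq σ hx
    have hpos : 0 < Function.minimalPeriod σ v :=
      Function.minimalPeriod_pos_of_mem_periodicPts
        ((Function.Injective.mem_periodicPts σ.injective v))
    refine ⟨i % Function.minimalPeriod σ v, by simpa using Nat.mod_lt _ hpos, ?_⟩
    rw [Function.iterate_mod_minimalPeriod_eq, Equiv.Perm.iterate_eq_pow, hi]
  · intros; rfl

lemma three_le_minimalPeriod {V : Type*} [Fintype V] (σ : Equiv.Perm V) (v : V) (hv : σ (σ v) ≠ v) :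
    3 ≤ Function.minimalPeriod σ v := by
  have hpos : 0 < Function.minimalPeriod σ v :=
    Function.minimalPeriod_pos_of_mem_periodicPts
      ((Function.Injective.mem_periodicPts σ.injective v))
  have hit : σ^[Function.minimalPeriod σ v] v = v := Function.iterate_minimalPeriod
  by_contra hlt
  have : Function.minimalPeriod σ v = 1 ∨ Function.minimalPeriod σ v = 2 := by omega
  rcases this with h | h <;> rw [h] at hit
  · simp only [Function.iterate_one] at hit
    exact hv (by rw [hit, hit])
  · exact hv hit

/-- The contribution of a cycle of length at least three is purely imaginary: it vanishes unless
the cycle runs along edges of the graph, and is then `±i`. -/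
lemma cycle_prod_add_star (hA : ThreeColored G A)
    (hcyc : ∀ (u : V) (c : G.Walk u u), c.IsCycle →
      walkWeight A c ∈ ({Complex.I, -Complex.I} : Set ℂ))
    (σ : Equiv.Perm V) (v : V) (hv : σ (σ v) ≠ v) :
    (∏ x ∈ Finset.univ.filter (fun x => σ.SameCycle v x), A (σ x) x) +
      ∏ x ∈ Finset.univ.filter (fun x => σ.SameCycle v x), A x (σ x) = 0 := by
  have hstar : ∀ x y, A x y = star (A y x) := fun x y => (hA.1.apply x y).symm
  have hw : (∏ x ∈ Finset.univ.filter (fun x => σ.SameCycle v x), A (σ x) x) =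
      star (∏ x ∈ Finset.univ.filter (fun x => σ.SameCycle v x), A x (σ x)) := by
    rw [star_prod]
    exact Finset.prod_congr rfl fun x _ => hstar _ _
  rw [hw]
  by_cases hadj : ∀ k : ℕ, G.Adj (σ^[k] v) (σ^[k + 1] v)
  · obtain ⟨u, c, hc, hcw⟩ := exists_cycle_of_orbit σ v hadj A (three_le_minimalPeriod σ v hv)
    have hm := hcyc u c hc
    have hp : ∏ x ∈ Finset.univ.filter (fun x => σ.SameCycle v x), A x (σ x) = walkWeight A c := by
      rw [hcw, prod_sameCycle_eq_prod_range]
      simp only [Function.iterate_succ_apply']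
    rw [hp]
    rcases hm with hm | hm
    · rw [hm]; simp
    · rw [Set.mem_singleton_iff] at hm
      rw [hm]; simp
  · push Not at hadj
    obtain ⟨k, hk⟩ := hadj
    have h0 : ∏ x ∈ Finset.univ.filter (fun x => σ.SameCycle v x), A x (σ x) = 0 := by
      refine Finset.prod_eq_zero (i := σ^[k] v) ?_ ?_
      · simp only [Finset.mem_filter, Finset.mem_univ, true_and]
        exact ⟨k, by simp [Equiv.Perm.iterate_eq_pow]⟩
      · rw [Function.iterate_succ_apply'] at hk
        by_cases he : σ^[k] v = σ (σ^[k] v)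
        · rw [← he]; exact hA.2.1 _
        · exact hA.2.2.2 _ _ he hk
    rw [h0]; simp

/-- Reversing a cycle of length at least three negates the product of the entries. -/
lemma prod_revCycle (hA : ThreeColored G A)
    (hcyc : ∀ (u : V) (c : G.Walk u u), c.IsCycle →
      walkWeight A c ∈ ({Complex.I, -Complex.I} : Set ℂ))
    (σ : Equiv.Perm V) (v : V) (hv : σ (σ v) ≠ v) :
    (∏ x, A (σ x) x) + ∏ x, A (revCycle σ v x) x = 0 := by
  rw [← Finset.prod_filter_mul_prod_filter_not Finset.univ (fun x => σ.SameCycle v x),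
    ← Finset.prod_filter_mul_prod_filter_not Finset.univ (fun x => σ.SameCycle v x)
      (fun x => A (revCycle σ v x) x)]
  have h1 : ∏ x ∈ Finset.univ.filter (fun x => ¬ σ.SameCycle v x), A (revCycle σ v x) x =
      ∏ x ∈ Finset.univ.filter (fun x => ¬ σ.SameCycle v x), A (σ x) x := by
    refine Finset.prod_congr rfl fun x hx => ?_
    rw [revCycle_apply, if_neg (Finset.mem_filter.1 hx).2]
  have h2 : ∏ x ∈ Finset.univ.filter (fun x => σ.SameCycle v x), A (revCycle σ v x) x =
      ∏ x ∈ Finset.univ.filter (fun x => σ.SameCycle v x), A x (σ x) := by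
    symm
    refine Finset.prod_bij (fun x _ => σ x) ?_ ?_ ?_ ?_
    · intro x hx
      simpa [Equiv.Perm.sameCycle_apply_right] using hx
    · intro x _ y _ hxy
      exact σ.injective hxy
    · intro y hy
      refine ⟨σ⁻¹ y, ?_, by simp⟩
      simp only [Finset.mem_filter, Finset.mem_univ, true_and] at hy ⊢
      exact Equiv.Perm.sameCycle_symm_apply_right.2 hy
    · intro x hx
      have hx' : σ.SameCycle v (σ x) :=
        Equiv.Perm.sameCycle_apply_right.2 (Finset.mem_filter.1 hx).2
      rw [revCycle_apply, if_pos hx']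
      simp
  rw [h1, h2, ← add_mul, cycle_prod_add_star hA hcyc σ v hv, zero_mul]

/-- The points at which `σ` is not an involution. -/
def badSet (σ : Equiv.Perm V) : Finset V := Finset.univ.filter (fun x => σ (σ x) ≠ x)

lemma badSet_revCycle (σ : Equiv.Perm V) (v : V) : badSet (revCycle σ v) = badSet σ := by
  ext x
  simp only [badSet, Finset.mem_filter, Finset.mem_univ, true_and]
  exact revCycle_sq_ne_iff σ v x

/-- Non-involutive permutations cancel in the Leibniz expansion. -/
lemma sum_nonInvolutive (hA : ThreeColored G A)
    (hcyc : ∀ (u : V) (c : G.Walk u u), c.IsCycle →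
      walkWeight A c ∈ ({Complex.I, -Complex.I} : Set ℂ)) :
    ∑ σ ∈ (Finset.univ : Finset (Equiv.Perm V)).filter (fun σ => (badSet σ).Nonempty),
      ((σ.sign : ℤ) : ℂ) * ∏ x, A (σ x) x = 0 := by
  have hbad : ∀ (σ : Equiv.Perm V) (x : V), x ∈ badSet σ → σ (σ x) ≠ x := fun σ x hx =>
    (Finset.mem_filter.1 hx).2
  -- The chosen point depends on `badSet σ` only, so it is unchanged by the reversal.
  have hex : ∀ s : Finset V, ∃ f : s.Nonempty → V, ∀ hs, f hs ∈ s := fun s =>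
    ⟨fun hs => hs.choose, fun hs => hs.choose_spec⟩
  choose f hf using hex
  have hfeq : ∀ (s t : Finset V) (hs : s.Nonempty) (ht : t.Nonempty), s = t → f s hs = f t ht := by
    rintro s t hs ht rfl; rfl
  have hne : ∀ σ ∈ (Finset.univ : Finset (Equiv.Perm V)).filter (fun σ => (badSet σ).Nonempty),
      (badSet σ).Nonempty := fun σ hσ => (Finset.mem_filter.1 hσ).2
  refine Finset.sum_involution (fun σ hσ => revCycle σ (f (badSet σ) (hne σ hσ))) ?_ ?_ ?_ ?_
  · intro σ hσ
    rw [sign_revCycle, ← mul_add, prod_revCycle hA hcyc σ _ (hbad _ _ (hf _ _)), mul_zero]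
  · intro σ hσ _ heq
    have hv := hbad _ _ (hf _ (hne σ hσ))
    have h := revCycle_apply σ (f (badSet σ) (hne σ hσ)) (f (badSet σ) (hne σ hσ))
    rw [heq, if_pos (Equiv.Perm.SameCycle.refl _ _), Equiv.Perm.eq_inv_iff_eq] at h
    exact hv h
  · intro σ hσ
    rw [Finset.mem_filter, badSet_revCycle]
    exact ⟨Finset.mem_univ _, hne σ hσ⟩
  · intro σ hσ
    have h := hfeq _ _ (by rw [badSet_revCycle]; exact hne σ hσ) (hne σ hσ)
      (badSet_revCycle σ (f (badSet σ) (hne σ hσ)))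
    simp only [h]
    exact revCycle_revCycle σ _

/-- Involutions moving every vertex along an edge; they encode perfect matchings. -/
def IsMatchPerm (G : SimpleGraph V) (σ : Equiv.Perm V) : Prop :=
  (∀ x, σ (σ x) = x) ∧ ∀ x, G.Adj x (σ x)

lemma term_isMatchPerm (hA : ThreeColored G A) (σ : Equiv.Perm V) (hσ : IsMatchPerm G σ) :
    ((σ.sign : ℤ) : ℂ) * ∏ x, A (σ x) x = (-1) ^ (Fintype.card V / 2) := by
  have hsq : σ ^ 2 = 1 := by
    ext x
    simpa [pow_two] using hσ.1 x
  have hfix : Fintype.card (Function.fixedPoints σ) = 0 := by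
    rw [Fintype.card_eq_zero_iff]
    exact ⟨fun x => (hσ.2 x).ne' x.2⟩
  have hprod : ∏ x, A (σ x) x = 1 := by
    refine Finset.prod_involution (fun x _ => σ x) ?_ ?_ ?_ ?_
    · intro x _
      have hs : A x (σ x) = star (A (σ x) x) := (hA.1.apply _ _).symm
      rw [hσ.1, hs]
      have := hA.2.2.1 _ _ (hσ.2 x).symm
      simp only [Set.mem_insert_iff, Set.mem_singleton_iff] at this
      rcases this with h | h | h | h <;> rw [h] <;> simp
    · intro x _ _
      exact (hσ.2 x).ne'
    · intros; exact Finset.mem_univ _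
    · intro x _; exact hσ.1 x
  rw [hprod, mul_one, Equiv.Perm.sign_of_pow_two_eq_one hsq, hfix, Nat.sub_zero]
  simp

open Classical in
lemma det_eq_card_matchPerm (hA : ThreeColored G A)
    (hcyc : ∀ (u : V) (c : G.Walk u u), c.IsCycle →
      walkWeight A c ∈ ({Complex.I, -Complex.I} : Set ℂ)) :
    A.det = (-1) ^ (Fintype.card V / 2) *
      (((Finset.univ : Finset (Equiv.Perm V)).filter (IsMatchPerm G)).card : ℂ) := by
  rw [Matrix.det_apply', ← Finset.sum_filter_add_sum_filter_not Finset.univ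
    (fun σ : Equiv.Perm V => (badSet σ).Nonempty), sum_nonInvolutive hA hcyc, zero_add]
  have hsub : Finset.univ.filter (IsMatchPerm G) ⊆
      (Finset.univ : Finset (Equiv.Perm V)).filter (fun σ => ¬ (badSet σ).Nonempty) := by
    intro σ hσ
    have hm := (Finset.mem_filter.1 hσ).2
    simp [badSet, Finset.filter_eq_empty_iff, hm.1]
  rw [← Finset.sum_subset hsub]
  · rw [Finset.sum_congr rfl fun σ hσ => term_isMatchPerm hA σ (Finset.mem_filter.1 hσ).2,
      Finset.sum_const, nsmul_eq_mul, mul_comm]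
  · intro σ hσ hnot
    have hinv : ∀ x, σ (σ x) = x := by
      simpa [badSet, Finset.filter_eq_empty_iff] using hσ
    have : ∃ x, ¬ G.Adj (σ x) x := by
      by_contra hall
      push Not at hall
      exact hnot (Finset.mem_filter.2 ⟨Finset.mem_univ _, hinv, fun x => (hall x).symm⟩)
    obtain ⟨x, hx⟩ := this
    rw [Finset.prod_eq_zero (Finset.mem_univ x), mul_zero]
    by_cases he : σ x = x
    · rw [he]; exact hA.2.1 x
    · exact hA.2.2.2 _ _ he hx

/-- The set of edges `{x, σ x}`. -/
def permEdges (σ : Equiv.Perm V) : Finset (Sym2 V) := Finset.univ.image (fun x => s(x, σ x))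

lemma mem_permEdges {σ : Equiv.Perm V} (hσ : IsMatchPerm G σ) (x y : V) :
    s(x, y) ∈ permEdges σ ↔ y = σ x := by
  simp only [permEdges, Finset.mem_image, Finset.mem_univ, true_and, Sym2.eq_iff]
  constructor
  · rintro ⟨z, ⟨rfl, rfl⟩ | ⟨rfl, rfl⟩⟩
    · rfl
    · exact (hσ.1 _).symm
  · rintro rfl
    exact ⟨x, Or.inl ⟨rfl, rfl⟩⟩

lemma isPM_permEdges {σ : Equiv.Perm V} (hσ : IsMatchPerm G σ) : IsPM G (permEdges σ) := by
  constructor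
  · intro e he
    obtain ⟨x, -, rfl⟩ := Finset.mem_image.1 he
    exact hσ.2 x
  · intro v
    rw [Finset.card_eq_one]
    refine ⟨s(v, σ v), ?_⟩
    ext e
    rw [Finset.mem_filter, Finset.mem_singleton]
    constructor
    · rintro ⟨he, hv⟩
      obtain ⟨w, rfl⟩ := hv
      rw [(mem_permEdges hσ v w).1 he]
    · rintro rfl
      exact ⟨(mem_permEdges hσ _ _).2 rfl, by simp⟩

lemma exists_matchPerm {M : Finset (Sym2 V)} (hM : IsPM G M) :
    ∃ σ : Equiv.Perm V, IsMatchPerm G σ ∧ permEdges σ = M := by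
  have hex : ∀ v, ∃ w, s(v, w) ∈ M ∧ ∀ z, s(v, z) ∈ M → z = w := by
    intro v
    obtain ⟨e, he⟩ := Finset.card_eq_one.1 (hM.2 v)
    have hmem : e ∈ M.filter (fun e => v ∈ e) := by rw [he]; simp
    obtain ⟨heM, w, rfl⟩ := Finset.mem_filter.1 hmem
    refine ⟨w, heM, fun z hz => ?_⟩
    have h' : s(v, z) ∈ M.filter (fun e => v ∈ e) := Finset.mem_filter.2 ⟨hz, by simp⟩
    rw [he, Finset.mem_singleton] at h'
    exact Sym2.congr_right.1 h'
  choose g hg hu using hex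
  have hgg : Function.Involutive g := fun v =>
    (hu (g v) v (by rw [Sym2.eq_swap]; exact hg v)).symm
  have hσ : IsMatchPerm G hgg.toPerm := ⟨hgg, fun v => hM.1 _ (hg v)⟩
  refine ⟨hgg.toPerm, hσ, ?_⟩
  ext e
  induction e with
  | _ x y =>
    rw [mem_permEdges hσ]
    constructor
    · rintro rfl; exact hg x
    · exact hu x y

lemma existsUnique_isPM_iff : (∃! M, IsPM G M) ↔ ∃! σ : Equiv.Perm V, IsMatchPerm G σ := by
  constructor
  · rintro ⟨M, hM, huniq⟩
    obtain ⟨σ, hσ, -⟩ := exists_matchPerm hM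
    refine ⟨σ, hσ, fun τ hτ => ?_⟩
    have h : permEdges τ = permEdges σ :=
      (huniq _ (isPM_permEdges hτ)).trans (huniq _ (isPM_permEdges hσ)).symm
    ext x
    rw [← mem_permEdges hσ, ← h, mem_permEdges hτ]
  · rintro ⟨σ, hσ, huniq⟩
    refine ⟨_, isPM_permEdges hσ, fun M hM => ?_⟩
    obtain ⟨τ, hτ, rfl⟩ := exists_matchPerm hM
    rw [huniq τ hτ]

end Determinant

/-- A connected unicyclic 3-colored digraph whose unique cycle has
weight `±i` is unimodular iff it has a unique perfect matching. -/
theorem stmt16 {V : Type*} [Fintype V] [DecidableEq V] (U : SimpleGraph V)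
    (A : Matrix V V ℂ) (hA : ThreeColored U A) (hU : Unicyclic V U)
    (hcyc : ∀ (u : V) (c : U.Walk u u), c.IsCycle →
      walkWeight A c ∈ ({Complex.I, -Complex.I} : Set ℂ)) :
    A.det ∈ ({1, -1} : Set ℂ) ↔ ∃! M, IsPM U M := by
  classical
  rw [existsUnique_isPM_iff, det_eq_card_matchPerm hA hcyc]
  set S := (Finset.univ : Finset (Equiv.Perm V)).filter (IsMatchPerm U) with hS
  have hcard : S.card = 1 ↔ ∃! σ : Equiv.Perm V, IsMatchPerm U σ := by
    rw [Finset.card_eq_one, Finset.singleton_iff_unique_mem]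
    simp [hS]
  rw [← hcard]
  -- Taking norms removes the sign.
  constructor
  · intro h
    have hn : ‖(-1 : ℂ) ^ (Fintype.card V / 2) * (S.card : ℂ)‖ = 1 := by
      rcases h with h | h
      · rw [h]; simp
      · rw [Set.mem_singleton_iff.1 h]; simp
    simpa using hn
  · intro h
    rw [h]
    rcases neg_one_pow_eq_or ℂ (Fintype.card V / 2) with h' | h' <;> simp [h']
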